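/- arXiv:1606.00323 — 2 statements merged into one kernel-verified Lean document; each statement's English description precedes it below -/
import Mathlib

section
/- For every stable weighted graph (G,w) of genus g ≥ 2 there exists a stable weighted graph (G',w') of genus g having exactly 3g − 3 edges, together with a weighted contraction (G',w') → (G,w), i.e., (G,w) is obtained from (G',w') by contracting finitely many edges. -/
/-- A finite multigraph: finite vertex and edge types, each edge carrying a source and a
target vertex (this is an auxiliary orientation); loops and parallel edges are allowed. -/
structure Multigraph where
  V : Type
  E : Type
  [fV : Fintype V]
  [fE : Fintype E]
  [dV : DecidableEq V]
  [dE : DecidableEq E]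
  s : E → V
  t : E → V

attribute [instance] Multigraph.fV Multigraph.fE Multigraph.dV Multigraph.dE

namespace Multigraph

variable (G : Multigraph)

/-- Two vertices are adjacent if some edge joins them. -/
def Adj (a b : G.V) : Prop :=
  ∃ e : G.E, (G.s e = a ∧ G.t e = b) ∨ (G.s e = b ∧ G.t e = a)

/-- A multigraph is connected if it is nonempty and any two vertices are joined by a walk. -/
def Connected : Prop :=
  Nonempty G.V ∧ ∀ a b : G.V, Relation.ReflTransGen G.Adj a b

/-- The graph obtained by deleting the edges in `F` is connected. -/
def ConnectedAvoiding (F : Set G.E) : Prop :=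
  ∀ a b : G.V, Relation.ReflTransGen
    (fun x y => ∃ e : G.E, e ∉ F ∧ ((G.s e = x ∧ G.t e = y) ∨ (G.s e = y ∧ G.t e = x))) a b

/-- The valency of a vertex: the number of half-edges at it (a loop counts twice). -/
def val (v : G.V) : ℕ :=
  (Finset.univ.filter (fun e => G.s e = v)).card + (Finset.univ.filter (fun e => G.t e = v)).card

/-- The number of loops based at a vertex. -/
def loops (v : G.V) : ℕ :=
  (Finset.univ.filter (fun e => G.s e = v ∧ G.t e = v)).card

/-- The number of edges joining two vertices. -/
def edgesBetween (v w : G.V) : ℕ :=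
  (Finset.univ.filter (fun e => (G.s e = v ∧ G.t e = w) ∨ (G.s e = w ∧ G.t e = v))).card

/-- The first Betti number `b₁(G) = |E| - |V| + 1` (of a connected graph). -/
def b1 : ℤ := (Fintype.card G.E : ℤ) - (Fintype.card G.V : ℤ) + 1

/-- The boundary map `∂ : C₁(G,ℤ) → C₀(G,ℤ)`, sending an edge `e` to `t e - s e`. -/
def boundaryHom : (G.E → ℤ) →+ (G.V → ℤ) where
  toFun c := fun v =>
    ∑ e : G.E, c e * ((if G.t e = v then 1 else 0) - (if G.s e = v then 1 else 0))
  map_zero' := by funext v; simp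
  map_add' a b := by
    funext v
    simp [Pi.add_apply, add_mul, Finset.sum_add_distrib]

/-- The coboundary map `δ : C₀(G,ℤ) → C₁(G,ℤ)`. -/
def coboundaryHom : (G.V → ℤ) →+ (G.E → ℤ) where
  toFun f := fun e => f (G.t e) - f (G.s e)
  map_zero' := by funext e; simp
  map_add' a b := by funext e; simp only [Pi.add_apply]; ring

/-- The cycle space `H₁(G,ℤ)`, i.e. the kernel of the boundary map. -/
def cycleSpace : AddSubgroup (G.E → ℤ) := (G.boundaryHom).ker

/-- `C` is the edge set of a closed walk with no repeated vertices except the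
initial/terminal one (so a loop is a cycle). -/
def IsCycle (C : Finset G.E) : Prop :=
  ∃ n : ℕ, 0 < n ∧ ∃ (e : Fin n → G.E) (v : Fin (n + 1) → G.V),
    Function.Injective e ∧
    (∀ i : Fin n, (G.s (e i) = v i.castSucc ∧ G.t (e i) = v i.succ) ∨
        (G.s (e i) = v i.succ ∧ G.t (e i) = v i.castSucc)) ∧
    v 0 = v (Fin.last n) ∧
    (∀ i j : Fin (n + 1), v i = v j →
        i = j ∨ (i = 0 ∧ j = Fin.last n) ∨ (i = Fin.last n ∧ j = 0)) ∧
    C = Finset.image e Finset.univ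

/-- A bridge (separating edge) is an edge contained in no cycle. -/
def IsBridge (e : G.E) : Prop := ∀ C : Finset G.E, G.IsCycle C → e ∉ C

def Bridgeless : Prop := ∀ e : G.E, ¬ G.IsBridge e

/-- `e₁ ∼ e₂` iff every cycle containing `e₁` contains `e₂` and conversely. -/
def Sim (e₁ e₂ : G.E) : Prop :=
  ∀ C : Finset G.E, G.IsCycle C → (e₁ ∈ C ↔ e₂ ∈ C)

/-- The C1-sets: the equivalence classes of the relation `Sim`. -/
def IsC1Set (S : Set G.E) : Prop := ∃ e : G.E, S = {e' | G.Sim e e'}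

/-- The multigraph obtained by contracting every edge in `F` (a contracted loop is
simply deleted). -/
noncomputable def contractSet (F : Set G.E) : Multigraph :=
  letI : DecidableEq (Quot (fun a b : G.V => ∃ e ∈ F, G.s e = a ∧ G.t e = b)) :=
    Classical.decEq _
  { V := Quot (fun a b : G.V => ∃ e ∈ F, G.s e = a ∧ G.t e = b)
    E := {e : G.E // e ∉ F}
    fV := Fintype.ofSurjective (Quot.mk _) (fun q => Quot.exists_rep q)
    fE := Fintype.ofInjective (Subtype.val) Subtype.val_injective
    dV := inferInstance
    dE := inferInstance
    s := fun e => Quot.mk _ (G.s e.1)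
    t := fun e => Quot.mk _ (G.t e.1) }

/-- `G^(2)`: the multigraph obtained from `G` by contracting every bridge. -/
noncomputable def contractBridges : Multigraph := G.contractSet {e | G.IsBridge e}

/-- An isomorphism of multigraphs. -/
structure Iso (G₁ G₂ : Multigraph) where
  vEquiv : G₁.V ≃ G₂.V
  eEquiv : G₁.E ≃ G₂.E
  endpoints : ∀ e : G₁.E,
    (G₂.s (eEquiv e) = vEquiv (G₁.s e) ∧ G₂.t (eEquiv e) = vEquiv (G₁.t e)) ∨
    (G₂.s (eEquiv e) = vEquiv (G₁.t e) ∧ G₂.t (eEquiv e) = vEquiv (G₁.s e))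

/-- The group of degree-zero divisors `Div⁰(G)`. -/
def Div0 : AddSubgroup (G.V → ℤ) where
  carrier := {D : G.V → ℤ | ∑ v : G.V, D v = 0}
  zero_mem' := by simp
  add_mem' := by
    intro a b ha hb
    simp only [Set.mem_setOf_eq, Pi.add_apply] at *
    simp [Finset.sum_add_distrib, ha, hb]
  neg_mem' := by
    intro a ha
    simp only [Set.mem_setOf_eq, Pi.neg_apply] at *
    simp [ha]

/-- The principal divisor `div(f_v)` associated to a vertex `v`. -/
def prinDiv (v : G.V) : G.V → ℤ :=
  fun u => if u = v then 2 * (G.loops v : ℤ) - (G.val v : ℤ) else (G.edgesBetween v u : ℤ)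

/-- The group of principal divisors `Prin(G)`. -/
def Prin : AddSubgroup (G.V → ℤ) := AddSubgroup.closure (Set.range G.prinDiv)

end Multigraph

/-- `Jac(G₁) ≅ Jac(G₂)`: a ℤ-linear isomorphism of the cycle lattices preserving the
bilinear forms for which the edges are orthonormal. -/
def JacIsoGraph (G₁ G₂ : Multigraph) : Prop :=
  ∃ φ : G₁.cycleSpace ≃+ G₂.cycleSpace,
    ∀ x y : G₁.cycleSpace,
      (∑ e : G₂.E, ((φ x : G₂.E → ℤ) e) * ((φ y : G₂.E → ℤ) e)) =
      ∑ e : G₁.E, ((x : G₁.E → ℤ) e) * ((y : G₁.E → ℤ) e)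

/-- Cyclic equivalence of two multigraphs: a bijection of the edge sets, together with
signs, inducing an isomorphism of the cycle spaces. -/
def CyclicallyEquivalent (G₁ G₂ : Multigraph) : Prop :=
  ∃ (σ : G₁.E ≃ G₂.E) (ε : G₁.E → ℤ),
    (∀ e, ε e = 1 ∨ ε e = -1) ∧
    ((fun x : G₁.E → ℤ => fun e₂ : G₂.E => ε (σ.symm e₂) * x (σ.symm e₂)) ''
        (G₁.cycleSpace : Set (G₁.E → ℤ))) = (G₂.cycleSpace : Set (G₂.E → ℤ))

/-- Cyclic equivalence of metric graphs: as for graphs, with a length-preserving bijection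
of the edge sets. -/
def MetricCycEquiv (G₁ : Multigraph) (ℓ₁ : G₁.E → ℝ) (G₂ : Multigraph) (ℓ₂ : G₂.E → ℝ) : Prop :=
  ∃ (σ : G₁.E ≃ G₂.E) (ε : G₁.E → ℤ),
    (∀ e, ℓ₂ (σ e) = ℓ₁ e) ∧
    (∀ e, ε e = 1 ∨ ε e = -1) ∧
    ((fun x : G₁.E → ℤ => fun e₂ : G₂.E => ε (σ.symm e₂) * x (σ.symm e₂)) ''
        (G₁.cycleSpace : Set (G₁.E → ℤ))) = (G₂.cycleSpace : Set (G₂.E → ℤ))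

/-- `c` chooses one representative edge in each C1-set (i.e. in each `Sim`-class). -/
def IsC1Choice (H : Multigraph) (c : H.E → H.E) : Prop :=
  (∀ e, H.Sim e (c e)) ∧ ∀ e e' : H.E, H.Sim e e' → c e = c e'

/-- The graph `G^(3)` obtained by contracting, in each C1-set, all edges except the
chosen one. -/
noncomputable def threeGraph (H : Multigraph) (c : H.E → H.E) : Multigraph :=
  H.contractSet {e | c e ≠ e}

/-- The length function on `G^(3)`: a surviving edge gets the total length of its C1-set. -/
noncomputable def threeLength (H : Multigraph) (ℓ : H.E → ℝ) (c : H.E → H.E) :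
    (threeGraph H c).E → ℝ :=
  fun e => ∑ e' ∈ Finset.univ.filter (fun e' => c e' = e.1), ℓ e'

/-- A weighted graph: a multigraph with a weight function on the vertices. -/
structure WeightedGraph where
  G : Multigraph
  w : G.V → ℕ

namespace WeightedGraph

/-- The genus `g(G,w) = b₁(G) + Σ_v w(v)`. -/
def genus (X : WeightedGraph) : ℤ := X.G.b1 + ∑ v : X.G.V, (X.w v : ℤ)

/-- A weighted graph is stable if it is connected, has genus at least 2, and every
vertex of weight zero has valency at least 3. -/
def Stable (X : WeightedGraph) : Prop :=
  X.G.Connected ∧ 2 ≤ X.genus ∧ ∀ v : X.G.V, X.w v = 0 → 3 ≤ X.G.val v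

/-- An isomorphism of weighted graphs. -/
structure Iso (X Y : WeightedGraph) where
  vEquiv : X.G.V ≃ Y.G.V
  eEquiv : X.G.E ≃ Y.G.E
  endpoints : ∀ e : X.G.E,
    (Y.G.s (eEquiv e) = vEquiv (X.G.s e) ∧ Y.G.t (eEquiv e) = vEquiv (X.G.t e)) ∨
    (Y.G.s (eEquiv e) = vEquiv (X.G.t e) ∧ Y.G.t (eEquiv e) = vEquiv (X.G.s e))
  weight_eq : ∀ v : X.G.V, Y.w (vEquiv v) = X.w v

/-- Contraction of a single edge of a weighted graph: a non-loop edge is contracted by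
identifying its two endpoints, the new vertex receiving the sum of the two weights;
a loop is deleted, the weight of its base vertex increasing by 1. -/
noncomputable def contract (X : WeightedGraph) (e₀ : X.G.E) : WeightedGraph :=
  letI : DecidableEq (Quot (fun a b : X.G.V => a = X.G.s e₀ ∧ b = X.G.t e₀)) :=
    Classical.decEq _
  { G := { V := Quot (fun a b : X.G.V => a = X.G.s e₀ ∧ b = X.G.t e₀)
           E := {e : X.G.E // e ≠ e₀}
           fV := Fintype.ofSurjective (Quot.mk _) (fun q => Quot.exists_rep q)
           fE := inferInstance
           dV := inferInstance
           dE := inferInstance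
           s := fun e => Quot.mk _ (X.G.s e.1)
           t := fun e => Quot.mk _ (X.G.t e.1) }
    w := fun q =>
      (∑ v ∈ Finset.univ.filter
          (fun v => Quot.mk (fun a b : X.G.V => a = X.G.s e₀ ∧ b = X.G.t e₀) v = q), X.w v) +
      (if X.G.s e₀ = X.G.t e₀ ∧
          Quot.mk (fun a b : X.G.V => a = X.G.s e₀ ∧ b = X.G.t e₀) (X.G.s e₀) = q
       then 1 else 0) }

/-- One step: `Y` is (isomorphic to) the contraction of a single edge of `X`. -/
def ContractStep (X Y : WeightedGraph) : Prop :=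
  ∃ e : X.G.E, Nonempty ((X.contract e).Iso Y)

/-- `X.ContractsTo Y`: `Y` is obtained from `X` by contracting finitely many edges. -/
def ContractsTo : WeightedGraph → WeightedGraph → Prop :=
  Relation.ReflTransGen ContractStep

/-- A sequence of exactly `n` loop contractions from `X` ending at (a graph isomorphic
to) `Y`. -/
def LoopContractSeq : ℕ → WeightedGraph → WeightedGraph → Prop
  | 0, X, Y => Nonempty (X.Iso Y)
  | n + 1, X, Y => ∃ e : X.G.E, X.G.s e = X.G.t e ∧ LoopContractSeq n (X.contract e) Y

/-- The weightless graph `G''` obtained by replacing each vertex `v` of positive weight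
with a weight-zero vertex carrying `w v` new loops. -/
def blowUp (X : WeightedGraph) : WeightedGraph where
  G := { V := X.G.V
         E := X.G.E ⊕ (Σ v : X.G.V, Fin (X.w v))
         fV := inferInstance
         fE := inferInstance
         dV := inferInstance
         dE := inferInstance
         s := Sum.elim X.G.s (fun p => p.1)
         t := Sum.elim X.G.t (fun p => p.1) }
  w := fun _ => 0

def totalWeight (X : WeightedGraph) : ℕ := ∑ v : X.G.V, X.w v

/-- The lattice `Λ = H₁(G,ℤ) ⊕ ℤ^(g - b₁(G))` underlying the Jacobian torus of a
weighted graph. -/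
abbrev JacLattice (X : WeightedGraph) : Type :=
  ↥X.G.cycleSpace × (Fin X.totalWeight → ℤ)

/-- The bilinear form on the Jacobian lattice: on `H₁(G,ℤ)` the edges are orthonormal,
and the form vanishes on the extra summand. -/
def jacForm (X : WeightedGraph) (p q : X.JacLattice) : ℤ :=
  ∑ e : X.G.E, (p.1 : X.G.E → ℤ) e * (q.1 : X.G.E → ℤ) e

end WeightedGraph

/-- A pure tropical curve: a multigraph with positive edge lengths. -/
structure PureTropicalCurve where
  G : Multigraph
  ℓ : G.E → ℝ
  pos : ∀ e, 0 < ℓ e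

/-- A (weighted) tropical curve: a multigraph with vertex weights and positive edge
lengths. -/
structure TropicalCurve where
  G : Multigraph
  w : G.V → ℕ
  ℓ : G.E → ℝ
  pos : ∀ e, 0 < ℓ e

namespace TropicalCurve

def totalWeight (Γ : TropicalCurve) : ℕ := ∑ v : Γ.G.V, Γ.w v

/-- The lattice `Λ = H₁(G,ℤ) ⊕ ℤ^(g - b₁(G))` underlying `Jac(Γ)`. -/
abbrev JacLattice (Γ : TropicalCurve) : Type :=
  ↥Γ.G.cycleSpace × (Fin Γ.totalWeight → ℤ)

/-- The bilinear form `( , )_ℓ` on the Jacobian lattice, vanishing on the extra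
summand. -/
noncomputable def jacForm (Γ : TropicalCurve) (p q : Γ.JacLattice) : ℝ :=
  ∑ e : Γ.G.E, Γ.ℓ e * ((p.1 : Γ.G.E → ℤ) e : ℝ) * ((q.1 : Γ.G.E → ℤ) e : ℝ)

end TropicalCurve

/-- `Jac(Γ₁) ≅ Jac(Γ₂)`: a ℤ-linear isomorphism of the lattices preserving the bilinear
forms. -/
def TropJacIso (Γ₁ Γ₂ : TropicalCurve) : Prop :=
  ∃ φ : Γ₁.JacLattice ≃+ Γ₂.JacLattice,
    ∀ p q : Γ₁.JacLattice, Γ₂.jacForm (φ p) (φ q) = Γ₁.jacForm p q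


/-!
Call `val v + 3 w(v) - 3` the excess of a vertex `v`. By the handshake lemma the excesses add up to
`3g - 3 - |E|`, and a graph is stable exactly when it is connected, has genus at least two and no
vertex has negative excess. So a stable graph with fewer than `3g - 3` edges has a vertex `v` of
positive excess. If `w(v) > 0`, trade a unit of weight for a loop at `v`; otherwise `v` has at
least four half-edges, and two of them can be moved to a new vertex joined to `v` by a new edge.
Either way the excess of `v` drops by one and no excess becomes negative, while contracting the new
edge gives back the original graph. Since contractions preserve the genus and reflect
connectedness, the new graph is stable of the same genus, and has one more edge.
-/

namespace Multigraph

/-- The unordered pair of endpoints of an edge, forgetting its orientation. -/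
def ends (G : Multigraph) (e : G.E) : Sym2 G.V := s(G.s e, G.t e)

/-- The half-edges at a vertex: `Sum.inl e` stands for the source half of the edge `e` and
`Sum.inr e` for its target half. -/
def halfEdgesAt (G : Multigraph) (v : G.V) : Finset (G.E ⊕ G.E) :=
  (Finset.univ.filter fun e => G.s e = v).disjSum (Finset.univ.filter fun e => G.t e = v)

/-- Add an edge `none` from `a` to `b`; the old edges become `some e`. -/
abbrev addEdge (G : Multigraph) (a b : G.V) : Multigraph where
  V := G.V
  E := Option G.E
  s := fun e => e.elim a G.s
  t := fun e => e.elim b G.t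

/-- Move the half-edges in `H` to a new vertex `none`; the old vertices become `some v`. -/
abbrev detach (G : Multigraph) (H : Finset (G.E ⊕ G.E)) : Multigraph where
  V := Option G.V
  E := G.E
  s := fun e => if Sum.inl e ∈ H then none else some (G.s e)
  t := fun e => if Sum.inr e ∈ H then none else some (G.t e)

theorem adj_iff_exists_ends_eq {G : Multigraph} {a b : G.V} :
    G.Adj a b ↔ ∃ e, G.ends e = s(a, b) := by
  simp only [Adj, ends, Sym2.eq_iff]

theorem card_halfEdgesAt (G : Multigraph) (v : G.V) : (G.halfEdgesAt v).card = G.val v :=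
  Finset.card_disjSum _ _

theorem disjoint_halfEdgesAt {G : Multigraph} {u v : G.V} (huv : u ≠ v) :
    Disjoint (G.halfEdgesAt u) (G.halfEdgesAt v) := by
  rw [Finset.disjoint_left]
  rintro (e | e) hu hv <;> simp_all [halfEdgesAt]

theorem sum_val (G : Multigraph) : ∑ v, G.val v = 2 * Fintype.card G.E := by
  have hfiber (f : G.E → G.V) :
      ∑ v, (Finset.univ.filter fun e => f e = v).card = Fintype.card G.E :=
    (Finset.card_eq_sum_card_fiberwise fun _ _ => Finset.mem_coe.2 (Finset.mem_univ _)).symm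
  simp only [val, Finset.sum_add_distrib, hfiber, two_mul]

theorem val_addEdge (G : Multigraph) (a b v : G.V) :
    (G.addEdge a b).val v = G.val v + ((if a = v then 1 else 0) + if b = v then 1 else 0) := by
  have hcount (x : G.V) (f : G.E → G.V) :
      (Finset.univ.filter fun e : Option G.E => e.elim x f = v).card =
        (Finset.univ.filter fun e => f e = v).card + if x = v then 1 else 0 := by
    rw [Finset.card_filter, Fintype.sum_option, add_comm, Finset.card_filter]
    rfl
  exact (congrArg₂ (· + ·) (hcount a G.s) (hcount b G.t)).trans (add_add_add_comm _ _ _ _)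

theorem halfEdgesAt_detach_none (G : Multigraph) (H : Finset (G.E ⊕ G.E)) :
    (G.detach H).halfEdgesAt none = H := by
  ext (e | e) <;> simp [halfEdgesAt, detach]

theorem halfEdgesAt_detach_some (G : Multigraph) (H : Finset (G.E ⊕ G.E)) (v : G.V) :
    (G.detach H).halfEdgesAt (some v) = G.halfEdgesAt v \ H := by
  ext (e | e) <;> simp [halfEdgesAt, detach, and_comm]

theorem val_detach_none (G : Multigraph) (H : Finset (G.E ⊕ G.E)) :
    (G.detach H).val none = H.card := by
  rw [← card_halfEdgesAt, halfEdgesAt_detach_none]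

theorem val_detach_some {G : Multigraph} {v : G.V} {H : Finset (G.E ⊕ G.E)}
    (hH : H ⊆ G.halfEdgesAt v) (u : G.V) :
    (G.detach H).val (some u) + (if u = v then H.card else 0) = G.val u := by
  rw [← card_halfEdgesAt, halfEdgesAt_detach_some, ← card_halfEdgesAt]
  split_ifs with huv
  · rw [huv, Finset.card_sdiff_add_card_eq_card hH]
  · rw [Finset.sdiff_eq_self_of_disjoint ((disjoint_halfEdgesAt huv).mono_right hH), add_zero]

theorem map_ends_detach {G : Multigraph} {v : G.V} {H : Finset (G.E ⊕ G.E)}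
    (hH : H ⊆ G.halfEdgesAt v) (e : G.E) :
    ((G.detach H).ends e).map (fun x : Option G.V => x.getD v) = G.ends e := by
  have hs : Sum.inl e ∈ H → G.s e = v := fun h => by simpa [halfEdgesAt] using hH h
  have ht : Sum.inr e ∈ H → G.t e = v := fun h => by simpa [halfEdgesAt] using hH h
  have hgetD (p : Prop) [Decidable p] (x : G.V) (hx : p → x = v) :
      (if p then none else some x).getD v = x := by
    split_ifs with hp
    exacts [(hx hp).symm, rfl]
  exact congrArg₂ Sym2.mk (hgetD _ _ hs) (hgetD _ _ ht)

theorem Connected.of_surjective {G H : Multigraph} (hH : H.Connected) (f : G.V → H.V)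
    (hf : Function.Surjective f)
    (hfiber : ∀ a b, f a = f b → Relation.ReflTransGen G.Adj a b)
    (hlift : ∀ e, ∃ e', (G.ends e').map f = H.ends e) : G.Connected := by
  have hadj {x y : H.V} (hxy : H.Adj x y) : ∃ a b, f a = x ∧ f b = y ∧ G.Adj a b := by
    obtain ⟨e, he⟩ := adj_iff_exists_ends_eq.1 hxy
    obtain ⟨e', he'⟩ := hlift e
    rw [he, ends, Sym2.map_mk, Sym2.eq_iff] at he'
    rcases he' with ⟨hx, hy⟩ | ⟨hy, hx⟩
    · exact ⟨_, _, hx, hy, e', .inl ⟨rfl, rfl⟩⟩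
    · exact ⟨_, _, hx, hy, e', .inr ⟨rfl, rfl⟩⟩
  have hwalk {a : G.V} {y : H.V} (hay : Relation.ReflTransGen H.Adj (f a) y) :
      ∀ b, f b = y → Relation.ReflTransGen G.Adj a b := by
    induction hay with
    | refl => exact fun b hb => hfiber a b hb.symm
    | tail _ hstep ih =>
      intro b hb
      obtain ⟨c, d, hc, hd, hcd⟩ := hadj hstep
      exact ((ih c hc).tail hcd).trans (hfiber d b (hd.trans hb.symm))
  exact ⟨hH.1.map (Function.surjInv hf), fun a b => hwalk (hH.2 (f a) (f b)) b rfl⟩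

end Multigraph

namespace WeightedGraph

section Contract

variable (X : WeightedGraph) (e₀ : X.G.E)

/-- The quotient map from the vertices of a graph to those of its contraction. -/
noncomputable def contractMk : X.G.V → (X.contract e₀).G.V := Quot.mk _

theorem contractMk_surjective : Function.Surjective (X.contractMk e₀) := Quot.exists_rep

theorem contractMk_s_eq_t : X.contractMk e₀ (X.G.s e₀) = X.contractMk e₀ (X.G.t e₀) :=
  Quot.sound ⟨rfl, rfl⟩

theorem contractMk_eq_iff {a b : X.G.V} :
    X.contractMk e₀ a = X.contractMk e₀ b ↔ a = b ∨ s(a, b) = X.G.ends e₀ := by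
  constructor
  · intro h
    let retract : X.G.V → X.G.V := fun v => if v = X.G.s e₀ then X.G.t e₀ else v
    have hretract : retract a = retract b :=
      congrArg (Quot.lift retract (by rintro _ _ ⟨rfl, rfl⟩; simp [retract])) h
    simp only [retract] at hretract
    simp only [Multigraph.ends, Sym2.eq_iff]
    grind
  · rintro (rfl | h)
    · rfl
    · rcases Sym2.eq_iff.1 h with ⟨rfl, rfl⟩ | ⟨rfl, rfl⟩
      exacts [X.contractMk_s_eq_t e₀, (X.contractMk_s_eq_t e₀).symm]

theorem ends_contract (e : (X.contract e₀).G.E) :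
    (X.contract e₀).G.ends e = (X.G.ends e.1).map (X.contractMk e₀) := rfl

theorem contract_w (q : (X.contract e₀).G.V) :
    (X.contract e₀).w q =
      (∑ v with X.contractMk e₀ v = q, X.w v) +
        if X.G.s e₀ = X.G.t e₀ ∧ X.contractMk e₀ (X.G.s e₀) = q then 1 else 0 := rfl

theorem card_contract_E : Fintype.card (X.contract e₀).G.E + 1 = Fintype.card X.G.E := by
  rw [← Fintype.card_option]
  exact Fintype.card_congr (Equiv.optionSubtypeNe e₀)

theorem contractMk_injective {e₀ : X.G.E} (hloop : X.G.s e₀ = X.G.t e₀) :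
    Function.Injective (X.contractMk e₀) := by
  intro a b hab
  rcases (X.contractMk_eq_iff e₀).1 hab with h | h
  · exact h
  · rcases Sym2.eq_iff.1 h with ⟨rfl, rfl⟩ | ⟨rfl, rfl⟩
    exacts [hloop, hloop.symm]

theorem contractMk_bijective_of_ne {e₀ : X.G.E} (hne : X.G.s e₀ ≠ X.G.t e₀) :
    Function.Bijective fun v : {v // v ≠ X.G.s e₀} => X.contractMk e₀ v := by
  constructor
  · rintro ⟨a, ha⟩ ⟨b, hb⟩ hab
    rcases (X.contractMk_eq_iff e₀).1 hab with h | h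
    · exact Subtype.ext h
    · rcases Sym2.eq_iff.1 h with ⟨has, -⟩ | ⟨-, hbs⟩
      exacts [absurd has ha, absurd hbs hb]
  · intro q
    obtain ⟨v, rfl⟩ := X.contractMk_surjective e₀ q
    by_cases hv : v = X.G.s e₀
    · exact ⟨⟨X.G.t e₀, hne.symm⟩, hv ▸ (X.contractMk_s_eq_t e₀).symm⟩
    · exact ⟨⟨v, hv⟩, rfl⟩

theorem card_contract_V :
    Fintype.card (X.contract e₀).G.V + (if X.G.s e₀ = X.G.t e₀ then 0 else 1) =
      Fintype.card X.G.V := by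
  split_ifs with hloop
  · exact (Fintype.card_of_bijective
      ⟨X.contractMk_injective hloop, X.contractMk_surjective e₀⟩).symm
  · rw [← Fintype.card_of_bijective (X.contractMk_bijective_of_ne hloop), ← Fintype.card_option]
    exact Fintype.card_congr (Equiv.optionSubtypeNe (X.G.s e₀))

theorem sum_contract_w :
    ∑ q, (X.contract e₀).w q = ∑ v, X.w v + if X.G.s e₀ = X.G.t e₀ then 1 else 0 := by
  simp only [contract_w, Finset.sum_add_distrib, Finset.sum_fiberwise, ite_and,
    Finset.sum_ite_irrel, Finset.sum_ite_eq, Finset.mem_univ, if_true, Finset.sum_const_zero]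

theorem genus_contract : (X.contract e₀).genus = X.genus := by
  have hE := X.card_contract_E e₀
  have hV := X.card_contract_V e₀
  have hw := X.sum_contract_w e₀
  simp only [genus, Multigraph.b1, ← Nat.cast_sum]
  split_ifs at hV hw <;> omega

end Contract

section Iso

variable {X Y : WeightedGraph}

theorem Iso.ends_eEquiv (i : X.Iso Y) (e : X.G.E) :
    Y.G.ends (i.eEquiv e) = (X.G.ends e).map i.vEquiv :=
  Sym2.eq_iff.2 (i.endpoints e)

theorem Iso.genus_eq (i : X.Iso Y) : X.genus = Y.genus := by
  simp only [genus, Multigraph.b1, Fintype.card_congr i.vEquiv, Fintype.card_congr i.eEquiv,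
    ← i.weight_eq, Equiv.sum_comp i.vEquiv fun v => (Y.w v : ℤ)]

end Iso

section ContractStep

variable {X Y : WeightedGraph}

theorem ContractStep.genus_eq (h : Y.ContractStep X) : Y.genus = X.genus := by
  obtain ⟨e₀, ⟨i⟩⟩ := h
  rw [← i.genus_eq, genus_contract]

theorem ContractStep.card_E (h : Y.ContractStep X) :
    Fintype.card Y.G.E = Fintype.card X.G.E + 1 := by
  obtain ⟨e₀, ⟨i⟩⟩ := h
  rw [← Fintype.card_congr i.eEquiv, card_contract_E]

theorem ContractStep.connected (h : Y.ContractStep X) (hX : X.G.Connected) : Y.G.Connected := by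
  obtain ⟨e₀, ⟨i⟩⟩ := h
  refine hX.of_surjective (i.vEquiv ∘ Y.contractMk e₀)
    (i.vEquiv.surjective.comp (Y.contractMk_surjective e₀)) (fun a b hab => ?_) (fun e => ?_)
  · rcases (Y.contractMk_eq_iff e₀).1 (i.vEquiv.injective hab) with rfl | he₀
    · exact .refl
    · exact .single (Multigraph.adj_iff_exists_ends_eq.2 ⟨e₀, he₀.symm⟩)
  · obtain ⟨e', rfl⟩ := i.eEquiv.surjective e
    exact ⟨e'.1, by rw [i.ends_eEquiv, ends_contract, Sym2.map_map]⟩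

theorem contractStep_of_surjective (e₀ : Y.G.E) (f : Y.G.V → X.G.V)
    (hf : Function.Surjective f)
    (hfiber : ∀ a b, f a = f b ↔ a = b ∨ s(a, b) = Y.G.ends e₀)
    (σ : {e // e ≠ e₀} ≃ X.G.E) (hends : ∀ e, X.G.ends (σ e) = (Y.G.ends e.1).map f)
    (hw : ∀ v, X.w v = (∑ a with f a = v, Y.w a) +
      if Y.G.s e₀ = Y.G.t e₀ ∧ f (Y.G.s e₀) = v then 1 else 0) :
    Y.ContractStep X := by
  have hker (a b : Y.G.V) : f a = f b ↔ Y.contractMk e₀ a = Y.contractMk e₀ b := by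
    rw [hfiber, contractMk_eq_iff]
  let fbar : (Y.contract e₀).G.V → X.G.V := Quot.lift f fun a b hab =>
    (hker a b).2 (Quot.sound hab)
  have hfbar : Function.Bijective fbar := by
    refine ⟨?_, fun v => (hf v).imp' (Y.contractMk e₀) fun _ => id⟩
    rintro ⟨a⟩ ⟨b⟩ hab
    exact (hker a b).1 hab
  refine ⟨e₀, ⟨⟨.ofBijective fbar hfbar, σ, fun e => Sym2.eq_iff.1 (hends e), fun q => ?_⟩⟩⟩
  obtain ⟨b, rfl⟩ := Y.contractMk_surjective e₀ q
  simp only [contract_w, ← hker]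
  exact hw (f b)

theorem contractStep_addEdge {G : Multigraph} {a b : G.V} {w : G.V → ℕ} (f : G.V → X.G.V)
    (hf : Function.Surjective f) (hfiber : ∀ x y, f x = f y ↔ x = y ∨ s(x, y) = s(a, b))
    (σ : G.E ≃ X.G.E) (hends : ∀ e, X.G.ends (σ e) = (G.ends e).map f)
    (hw : ∀ v, X.w v = (∑ x with f x = v, w x) + if a = b ∧ f a = v then 1 else 0) :
    ContractStep ⟨G.addEdge a b, w⟩ X := by
  let oldEdges : {e : Option G.E // e ≠ none} ≃ G.E :=
    (Equiv.subtypeEquivRight fun _ => Option.isSome_iff_ne_none.symm).trans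
      (Equiv.optionIsSomeEquiv G.E)
  refine contractStep_of_surjective (Y := ⟨G.addEdge a b, w⟩) none f hf hfiber
    (oldEdges.trans σ) ?_ hw
  rintro ⟨_ | e, he⟩
  exacts [absurd rfl he, hends e]

end ContractStep

section Excess

/-- The contribution of a vertex to `3g - 3 - |E|`. A vertex violates the stability condition
exactly when its excess is negative. -/
def excess (X : WeightedGraph) (v : X.G.V) : ℤ := X.G.val v + 3 * X.w v - 3

variable {X Y : WeightedGraph}

theorem excess_nonneg_iff {v : X.G.V} : 0 ≤ X.excess v ↔ (X.w v = 0 → 3 ≤ X.G.val v) := by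
  rw [excess]
  omega

theorem sum_excess (X : WeightedGraph) :
    ∑ v, X.excess v = 3 * X.genus - 3 - Fintype.card X.G.E := by
  have hval : ∑ v, (X.G.val v : ℤ) = 2 * Fintype.card X.G.E := mod_cast X.G.sum_val
  simp only [excess, Finset.sum_sub_distrib, Finset.sum_add_distrib, ← Finset.mul_sum, hval,
    Finset.sum_const, Finset.card_univ, nsmul_eq_mul, genus, Multigraph.b1]
  ring

theorem Stable.excess_nonneg (hX : X.Stable) (v : X.G.V) : 0 ≤ X.excess v :=
  excess_nonneg_iff.2 (hX.2.2 v)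

theorem Stable.card_E_le (hX : X.Stable) : (Fintype.card X.G.E : ℤ) ≤ 3 * X.genus - 3 := by
  rw [← sub_nonneg, ← sum_excess]
  exact Finset.sum_nonneg fun v _ => hX.excess_nonneg v

theorem ContractStep.stable (h : Y.ContractStep X) (hX : X.Stable)
    (hY : ∀ v, 0 ≤ Y.excess v) : Y.Stable :=
  ⟨h.connected hX.1, h.genus_eq ▸ hX.2.1, fun v => excess_nonneg_iff.1 (hY v)⟩

end Excess

section AddLoop

variable {X : WeightedGraph} {v : X.G.V}

/-- Trade one unit of weight at `v` for a loop at `v`. The subtraction is truncated, so this is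
meaningful only if `v` has positive weight. -/
abbrev addLoop (X : WeightedGraph) (v : X.G.V) : WeightedGraph where
  G := X.G.addEdge v v
  w := Function.update X.w v (X.w v - 1)

theorem addLoop_contractStep (hv : 0 < X.w v) : (X.addLoop v).ContractStep X := by
  refine contractStep_addEdge id Function.surjective_id (fun x y => ?_) (Equiv.refl _)
    (fun e => (congrFun Sym2.map_id _).symm) (fun u => ?_)
  · simp only [id, Sym2.eq_iff]
    grind
  · simp only [id, Finset.filter_eq', Finset.mem_univ, if_true, Finset.sum_singleton, true_and,
      Function.update_apply]
    grind

theorem excess_addLoop (hv : 0 < X.w v) (u : X.G.V) :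
    (X.addLoop v).excess u = X.excess u - if u = v then 1 else 0 := by
  have hval := X.G.val_addEdge v v u
  simp only [excess, Function.update_apply]
  grind

theorem Stable.addLoop (hX : X.Stable) (hv : 0 < X.w v) (hexc : 0 < X.excess v) :
    (X.addLoop v).Stable := by
  refine (addLoop_contractStep hv).stable hX fun u => ?_
  rw [excess_addLoop hv]
  split_ifs with huv
  · rw [huv]
    omega
  · simpa using hX.excess_nonneg u

end AddLoop

section SplitVertex

variable {X : WeightedGraph} {v : X.G.V} {H : Finset (X.G.E ⊕ X.G.E)}

/-- Move the half-edges in `H` to a new vertex `none` of weight zero, joined to `v` by a new edge.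
This is a splitting of the vertex `v` if all the half-edges in `H` are at `v`. -/
abbrev splitVertex (X : WeightedGraph) (v : X.G.V) (H : Finset (X.G.E ⊕ X.G.E)) :
    WeightedGraph where
  G := (X.G.detach H).addEdge (some v) none
  w := fun u => u.elim 0 X.w

theorem splitVertex_contractStep (hH : H ⊆ X.G.halfEdgesAt v) :
    (X.splitVertex v H).ContractStep X := by
  refine contractStep_addEdge (G := X.G.detach H) (fun x : Option X.G.V => x.getD v)
    (fun u => ⟨some u, rfl⟩) ?_ (Equiv.refl _) (fun e => (X.G.map_ends_detach hH e).symm) ?_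
  · rintro (_ | x) (_ | y) <;> simp [eq_comm]
  · intro u
    rw [Finset.sum_filter, Fintype.sum_option]
    simp

theorem excess_splitVertex_none (X : WeightedGraph) (v : X.G.V) (H : Finset (X.G.E ⊕ X.G.E)) :
    (X.splitVertex v H).excess none = H.card - 2 := by
  have hval := (X.G.detach H).val_addEdge (some v) none none
  rw [X.G.val_detach_none] at hval
  simp only [reduceCtorEq, if_false, if_true, zero_add] at hval
  simp only [excess, Option.elim, hval]
  omega

theorem excess_splitVertex_some (hH : H ⊆ X.G.halfEdgesAt v) (u : X.G.V) :
    (X.splitVertex v H).excess (some u) = X.excess u - if u = v then (H.card : ℤ) - 1 else 0 := by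
  have hval := (X.G.detach H).val_addEdge (some v) none (some u)
  have hdetach := Multigraph.val_detach_some hH u
  simp only [Option.some.injEq, reduceCtorEq, if_false, add_zero] at hval
  simp only [excess, Option.elim, hval]
  grind

theorem Stable.splitVertex (hX : X.Stable) (hH : H ⊆ X.G.halfEdgesAt v) (htwo : 2 ≤ H.card)
    (hexc : H.card ≤ X.excess v + 1) : (X.splitVertex v H).Stable := by
  refine (splitVertex_contractStep hH).stable hX ?_
  rintro (_ | u)
  · rw [excess_splitVertex_none]
    omega
  · rw [excess_splitVertex_some hH]
    split_ifs with huv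
    · rw [huv]
      omega
    · simpa using hX.excess_nonneg u

end SplitVertex

theorem Stable.exists_contractStep {X : WeightedGraph} (hX : X.Stable)
    (hlt : (Fintype.card X.G.E : ℤ) < 3 * X.genus - 3) :
    ∃ Y : WeightedGraph, Y.Stable ∧ Y.ContractStep X := by
  obtain ⟨v, -, hexc⟩ : ∃ v ∈ Finset.univ, 0 < X.excess v :=
    Finset.exists_lt_of_sum_lt (by simpa [sum_excess] using hlt)
  rcases Nat.eq_zero_or_pos (X.w v) with hw | hw
  · have hval : 2 ≤ (X.G.halfEdgesAt v).card := by
      rw [X.G.card_halfEdgesAt]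
      exact le_trans (by norm_num) (hX.2.2 v hw)
    obtain ⟨H, hH, htwo⟩ := Finset.exists_subset_card_eq hval
    exact ⟨X.splitVertex v H, hX.splitVertex hH htwo.ge (by omega), splitVertex_contractStep hH⟩
  · exact ⟨X.addLoop v, hX.addLoop hw hexc, addLoop_contractStep hw⟩

end WeightedGraph

/-- Every stable weighted graph of genus `g ≥ 2` is obtained from some
stable weighted graph of genus `g` with exactly `3g - 3` edges by a weighted
contraction, i.e. by contracting finitely many edges. -/
theorem exists_maximal_stable_contraction (X : WeightedGraph) (g : ℤ) (hg : 2 ≤ g)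
    (hX : X.Stable) (hgen : X.genus = g) :
    ∃ X' : WeightedGraph, X'.Stable ∧ X'.genus = g ∧
      (Fintype.card X'.G.E : ℤ) = 3 * g - 3 ∧ X'.ContractsTo X := by
  obtain ⟨missing, hmissing⟩ := Int.eq_ofNat_of_zero_le (sub_nonneg.2 hX.card_E_le)
  induction missing generalizing X with
  | zero => exact ⟨X, hX, hgen, by omega, .refl⟩
  | succ missing ih =>
    obtain ⟨Y, hY, hstep⟩ := hX.exists_contractStep (by omega)
    have hgenY : Y.genus = g := hstep.genus_eq.trans hgen
    obtain ⟨X', hX', hgen', hcard, hcontr⟩ :=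
      ih Y hY hgenY (by rw [hstep.card_E]; omega)
    exact ⟨X', hX', hgen', hcard, hcontr.tail hstep⟩
end

section
/- Torelli theorem for graphs: for two finite connected multigraphs G1 and G2, the Jacobian tori Jac(G1) and Jac(G2) are isomorphic (i.e., there is a ℤ-linear isomorphism H1(G1,ℤ) → H1(G2,ℤ) preserving the bilinear forms) if and only if G1^(2) and G2^(2) are cyclically equivalent. -/
/-! The quadratic form on the cycle lattice `H₁(G,ℤ)` determines the `ℓ¹`-norm `∑ e, |x e|`.
Indeed a cycle `x` is a sum of cycles with coefficients in `{-1, 0, 1}` whose signs agree with those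
of `x`, so that `∑ e, |x e|` is the sum of their squared lengths; as `|n| ≤ n ^ 2`, an isometry
cannot increase the `ℓ¹`-norm, and neither can its inverse.

The `ℓ¹`-norm in turn determines the coordinate functionals up to order and sign: the absolute
values of functionals with distinct kernels are linearly independent, because `|f|` fails to be
affine only across the hyperplane `f = 0`. Matching the coordinates gives the bijection of the edges
and the signs.

A bridge `e` is a coboundary, hence orthogonal to all cycles, so contracting the bridges does not
change the lattice, and each of the remaining edges has coefficient `1` in some cycle. -/

lemma exists_mem_forall_apply_ne_zero {R M : Type*} [CommRing R] [IsDomain R] [Infinite R]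
    [AddCommGroup M] [Module R M] (K : Submodule R M) (s : Finset (M →ₗ[R] R))
    (hs : ∀ f ∈ s, ∃ x ∈ K, f x ≠ 0) : ∃ x ∈ K, ∀ f ∈ s, f x ≠ 0 := by
  classical
  induction s using Finset.induction_on with
  | empty => exact ⟨0, K.zero_mem, by simp⟩
  | insert g s _ ih =>
    obtain ⟨x, hxK, hx⟩ := ih fun f hf => hs f (Finset.mem_insert_of_mem hf)
    obtain ⟨y, hyK, hy⟩ := hs g (Finset.mem_insert_self g s)
    have finite_bad : ∀ f ∈ insert g s, {r : R | f (r • x + y) = 0}.Finite := by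
      intro f hf
      have hxy : f x = 0 → f y ≠ 0 := by
        rcases Finset.mem_insert.1 hf with rfl | hf
        exacts [fun _ => hy, fun h => absurd h (hx f hf)]
      refine Set.Subsingleton.finite fun r hr r' hr' => ?_
      simp only [Set.mem_ofPred_eq, map_add, map_smul, smul_eq_mul] at hr hr'
      have hfx : f x ≠ 0 := fun h => hxy h (by simpa [h] using hr)
      exact mul_right_cancel₀ hfx (add_right_cancel (hr.trans hr'.symm))
    obtain ⟨r, hr⟩ := ((insert g s).finite_toSet.biUnion finite_bad).exists_notMem
    refine ⟨r • x + y, K.add_mem (K.smul_mem r hxK) hyK, fun f hf h => hr ?_⟩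
    exact Set.mem_biUnion (Finset.mem_coe.2 hf) h

lemma abs_add_add_abs_sub {A : Type*} [AddCommGroup A] [LinearOrder A] [IsOrderedAddMonoid A]
    {a b : A} (h : |b| ≤ |a|) : |a + b| + |a - b| = |a| + |a| := by
  grind

section AbsFunctional

variable {R M : Type*} [CommRing R] [LinearOrder R] [IsStrictOrderedRing R] [Archimedean R]
  [AddCommGroup M] [Module R M]

lemma exists_mem_forall_abs_apply_le (K : Submodule R M) (s : Finset (M →ₗ[R] R))
    (hs : ∀ f ∈ s, ∃ x ∈ K, f x ≠ 0) (y : M) : ∃ x ∈ K, ∀ f ∈ s, |f y| ≤ |f x| := by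
  obtain ⟨x, hxK, hx⟩ := exists_mem_forall_apply_ne_zero K s hs
  have large (f : M →ₗ[R] R) (hf : f ∈ s) : ∀ᶠ n : ℕ in Filter.atTop, |f y| ≤ n * |f x| :=
    (tendsto_natCast_atTop_atTop.atTop_mul_const' (abs_pos.2 (hx f hf))).eventually_ge_atTop _
  obtain ⟨n, hn⟩ := ((Filter.eventually_all_finset s).2 large).exists
  exact ⟨n • x, K.smul_of_tower_mem n hxK, fun f hf => by simpa [abs_mul] using hn f hf⟩

/-- Across the hyperplane `f i = 0`, far away from all the other hyperplanes, only `|f i|` has a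
nonzero second difference. -/
theorem linearIndependent_abs {ι : Type*} (f : ι → M →ₗ[R] R) (hf : ∀ i, f i ≠ 0)
    (hker : ∀ i j, (f i).ker ≤ (f j).ker → i = j) :
    LinearIndependent R fun i => |(f i : M → R)| := by
  classical
  rw [linearIndependent_iff']
  intro s c hc i hi
  obtain ⟨y, hy⟩ : ∃ y, f i y ≠ 0 := by simpa using DFunLike.ne_iff.1 (hf i)
  obtain ⟨x, hx, hxy⟩ :=
    exists_mem_forall_abs_apply_le (f i).ker ((s.erase i).image f) (y := y) fun g hg => by
      obtain ⟨j, hj, rfl⟩ := Finset.mem_image.1 hg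
      simpa using Set.not_subset.1 fun h => (Finset.ne_of_mem_erase hj) (hker i j h).symm
  have vanish (z : M) : ∑ j ∈ s, c j * |f j z| = 0 := by simpa using congrFun hc z
  have second_difference (j : ι) (hj : j ∈ s) (hji : j ≠ i) :
      c j * (|f j (x + y)| + |f j (x - y)| - 2 * |f j x|) = 0 := by
    have h := hxy (f j) (Finset.mem_image_of_mem f (Finset.mem_erase.2 ⟨hji, hj⟩))
    rw [map_add, map_sub, abs_add_add_abs_sub h, two_mul, sub_self, mul_zero]
  have total : ∑ j ∈ s, c j * (|f j (x + y)| + |f j (x - y)| - 2 * |f j x|) = 0 := by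
    simp only [mul_sub, mul_add, Finset.sum_sub_distrib, Finset.sum_add_distrib, vanish,
      mul_left_comm _ (2 : R), ← Finset.mul_sum, mul_zero, add_zero, sub_zero]
  rw [Finset.sum_eq_single_of_mem i hi second_difference] at total
  have hfx : f i x = 0 := hx
  simpa [hfx, hy, ← two_mul] using total

end AbsFunctional

lemma exists_unit_smul_eq_of_ker_le {R M : Type*} [CommRing R] [AddCommGroup M] [Module R M]
    {f g : M →ₗ[R] R} (hf : Function.Surjective f) (hg : Function.Surjective g)
    (h : f.ker ≤ g.ker) : ∃ u : Rˣ, g = u • f := by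
  obtain ⟨a, ha⟩ := hf 1
  obtain ⟨b, hb⟩ := hg 1
  have apply_eq (x : M) : g x = g a * f x := by
    have hx : x - f x • a ∈ f.ker := by simp [ha]
    have := h hx
    simp only [LinearMap.mem_ker, map_sub, map_smul, smul_eq_mul] at this
    linear_combination this
  exact ⟨Units.mkOfMulEqOne (g a) (f b) (by rw [← apply_eq, hb]), LinearMap.ext apply_eq⟩

lemma exists_equiv_of_linearIndependent_of_sum_eq {R M α ι κ : Type*} [Semiring R] [CharZero R]
    [AddCommMonoid M] [Module R M] [Fintype ι] [Fintype κ] {b : α → M}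
    (hb : LinearIndependent R b) {u : ι → α} {v : κ → α} (h : ∑ i, b (u i) = ∑ j, b (v j)) :
    ∃ σ : ι ≃ κ, ∀ i, v (σ i) = u i := by
  classical
  have multiplicities : ∑ i, Finsupp.single (u i) (1 : R) = ∑ j, Finsupp.single (v j) (1 : R) :=
    hb (by simpa using h)
  have card_fiber (a : α) : Fintype.card {i // u i = a} = Fintype.card {j // v j = a} := by
    have := DFunLike.congr_fun multiplicities a
    simpa [Finsupp.finsetSum_apply, Finsupp.single_apply, Fintype.card_subtype] using this
  let fiberEquiv (a : α) := Fintype.equivOfCardEq (card_fiber a)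
  exact ⟨Equiv.ofFiberEquiv fiberEquiv, Equiv.ofFiberEquiv_map fiberEquiv⟩

lemma exists_equiv_smul_eq_of_sum_abs_eq {M ι κ : Type*} [AddCommGroup M] [Fintype ι] [Fintype κ]
    {f : ι → M →ₗ[ℤ] ℤ} {g : κ → M →ₗ[ℤ] ℤ} (hf : ∀ i, Function.Surjective (f i))
    (hg : ∀ j, Function.Surjective (g j)) (hfg : ∀ x, ∑ i, |f i x| = ∑ j, |g j x|) :
    ∃ (σ : ι ≃ κ) (ε : ι → ℤˣ), ∀ i, g (σ i) = ε i • f i := by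
  -- One functional is chosen for each absolute value, since `f` and `g` may repeat a functional
  -- up to sign.
  let A : Set (M → ℤ) := {a | ∃ h : M →ₗ[ℤ] ℤ, Function.Surjective h ∧ |(h : M → ℤ)| = a}
  choose rep rep_surj abs_rep using fun a : A => a.2
  have independent : LinearIndependent ℤ fun a : A => (a : M → ℤ) := by
    refine (funext abs_rep : (fun a => |(rep a : M → ℤ)|) = _) ▸
      linearIndependent_abs rep (fun a h => ?_) fun a b hab => Subtype.ext ?_
    · obtain ⟨x, hx⟩ := rep_surj a 1
      simp [h] at hx
    · obtain ⟨u, hu⟩ := exists_unit_smul_eq_of_ker_le (rep_surj a) (rep_surj b) hab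
      rw [← abs_rep a, ← abs_rep b, hu]
      rcases Int.units_eq_one_or u with rfl | rfl <;> simp
  obtain ⟨σ, hσ⟩ := exists_equiv_of_linearIndependent_of_sum_eq independent
    (u := fun i => ⟨_, f i, hf i, rfl⟩) (v := fun j => ⟨_, g j, hg j, rfl⟩)
    (by ext x; simpa using hfg x)
  have abs_eq (i : ι) : |(g (σ i) : M → ℤ)| = |(f i : M → ℤ)| := congrArg Subtype.val (hσ i)
  have ker_le (i : ι) : (f i).ker ≤ (g (σ i)).ker := fun x hx => by
    have := congrFun (abs_eq i) x
    simpa [show f i x = 0 from hx] using this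
  choose ε hε using fun i => exists_unit_smul_eq_of_ker_le (hf i) (hg (σ i)) (ker_le i)
  exact ⟨σ, ε, hε⟩

lemma abs_eq_abs_sub_add_mul_self {a b : ℤ} (h : b = 0 ∨ b = a.sign) :
    |a| = |a - b| + b * b := by
  rcases h with rfl | rfl
  · simp
  · rcases lt_trichotomy a 0 with ha | rfl | ha
    · rw [Int.sign_eq_neg_one_of_neg ha, abs_of_neg ha, abs_of_nonpos (by lia)]; ring
    · simp
    · rw [Int.sign_eq_one_of_pos ha, abs_of_pos ha, abs_of_nonneg (by lia)]; ring

section Lattices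

variable {ι κ : Type*}

/-- A lattice of integer vectors is regular if every nonzero vector dominates, coordinatewise with
matching signs, a nonzero vector of the lattice with entries in `{-1, 0, 1}`. These are Tutte's
regular chain groups, the cycle lattices of regular matroids. -/
def IsRegularLattice (L : AddSubgroup (ι → ℤ)) : Prop :=
  ∀ x ∈ L, x ≠ 0 → ∃ y ∈ L, y ≠ 0 ∧ ∀ i, y i = 0 ∨ y i = (x i).sign

/-- The `i`-th coordinate functional on a lattice of integer vectors. -/
def latticeCoord (L : AddSubgroup (ι → ℤ)) (i : ι) : L →ₗ[ℤ] ℤ :=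
  LinearMap.proj i ∘ₗ L.subtype.toIntLinearMap

/-- The signed permutation map sending the `i`-th basis vector to `ε i` times the `σ i`-th one. -/
def signedReindex (σ : ι ≃ κ) (ε : ι → ℤˣ) : (ι → ℤ) →+ (κ → ℤ) where
  toFun x j := ε (σ.symm j) * x (σ.symm j)
  map_zero' := by ext; simp
  map_add' x y := by ext; simp [mul_add]

/-- Two lattices are signed equivalent if a signed permutation of the coordinates carries one onto
the other. -/
def SignedEquivalent (L : AddSubgroup (ι → ℤ)) (M : AddSubgroup (κ → ℤ)) : Prop :=
  ∃ (σ : ι ≃ κ) (ε : ι → ℤˣ), L.map (signedReindex σ ε) = M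

variable {L : AddSubgroup (ι → ℤ)} {M : AddSubgroup (κ → ℤ)}

lemma latticeCoord_surjective {i : ι} (h : ∃ x ∈ L, x i = 1) :
    Function.Surjective (latticeCoord L i) := by
  obtain ⟨x, hx, hxi⟩ := h
  exact fun n => ⟨n • ⟨x, hx⟩, by simp [latticeCoord, hxi]⟩

variable [Fintype ι] [Fintype κ]

/-- Two lattices are isometric if they are isomorphic compatibly with the standard inner products
of the ambient spaces. -/
def LatticeIsometric (L : AddSubgroup (ι → ℤ)) (M : AddSubgroup (κ → ℤ)) : Prop :=
  ∃ φ : L ≃+ M, ∀ x y, (φ x : κ → ℤ) ⬝ᵥ φ y = (x : ι → ℤ) ⬝ᵥ y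

lemma IsRegularLattice.exists_multiset_sum_eq (hL : IsRegularLattice L) (x : L) :
    ∃ s : Multiset L, s.sum = x ∧
      (s.map fun y : L => (y : ι → ℤ) ⬝ᵥ y).sum = ∑ i, |(x : ι → ℤ) i| := by
  induction hn : (∑ i, |(x : ι → ℤ) i|).toNat using Nat.strong_induction_on generalizing x with
  | _ n ih =>
    by_cases hx : x = 0
    · exact ⟨0, by simp [hx]⟩
    obtain ⟨y, hyL, hy0, hy⟩ := hL x x.2 (by simpa using hx)
    have split : ∑ i, |(x : ι → ℤ) i| = ∑ i, |(x : ι → ℤ) i - y i| + y ⬝ᵥ y := by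
      simp only [dotProduct, ← Finset.sum_add_distrib, ← abs_eq_abs_sub_add_mul_self (hy _)]
    have y_pos : 0 < y ⬝ᵥ y :=
      (Finset.sum_nonneg fun i _ => mul_self_nonneg (y i)).lt_of_ne'
        (mt dotProduct_self_eq_zero.1 hy0)
    have diff_nonneg : 0 ≤ ∑ i, |(x : ι → ℤ) i - y i| := Finset.sum_nonneg fun _ _ => abs_nonneg _
    obtain ⟨s, s_sum, s_sq⟩ := ih _ (by simp; lia) (x - ⟨y, hyL⟩) rfl
    exact ⟨⟨y, hyL⟩ ::ₘ s, by simp [s_sum], by simp [s_sq, split, add_comm]⟩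

theorem IsRegularLattice.sum_abs_apply_le (hL : IsRegularLattice L) (φ : L →+ (κ → ℤ))
    (hφ : ∀ x, φ x ⬝ᵥ φ x = (x : ι → ℤ) ⬝ᵥ x) (x : L) :
    ∑ j, |φ x j| ≤ ∑ i, |(x : ι → ℤ) i| := by
  obtain ⟨s, rfl, s_sq⟩ := hL.exists_multiset_sum_eq x
  calc ∑ j, |φ s.sum j| ≤ (s.map fun y => ∑ j, |φ y j|).sum :=
        Multiset.le_sum_of_subadditive (fun y : L => ∑ j, |φ y j|) (by simp) (fun y z => by
          simpa [← Finset.sum_add_distrib] using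
            Finset.sum_le_sum fun j _ => abs_add_le (φ y j) (φ z j)) s
    _ ≤ (s.map fun y => φ y ⬝ᵥ φ y).sum :=
        Multiset.sum_map_le_sum_map _ _ fun y _ => Finset.sum_le_sum fun j _ => by
          rw [← sq, Int.abs_eq_natAbs]; exact Int.natAbs_le_self_sq _
    _ = ∑ i, |(s.sum : ι → ℤ) i| := by simp only [hφ, s_sq]

lemma LatticeIsometric.symm : LatticeIsometric L M → LatticeIsometric M L := by
  rintro ⟨φ, hφ⟩
  exact ⟨φ.symm, fun x y => by rw [← hφ, φ.apply_symm_apply, φ.apply_symm_apply]⟩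

lemma LatticeIsometric.trans {μ : Type*} [Fintype μ] {N : AddSubgroup (μ → ℤ)} :
    LatticeIsometric L M → LatticeIsometric M N → LatticeIsometric L N := by
  rintro ⟨φ, hφ⟩ ⟨ψ, hψ⟩
  exact ⟨φ.trans ψ, fun x y => (hψ _ _).trans (hφ _ _)⟩

lemma latticeIsometric_map (ψ : (ι → ℤ) →+ (κ → ℤ))
    (hψ : ∀ x ∈ L, ∀ y ∈ L, ψ x ⬝ᵥ ψ y = x ⬝ᵥ y) : LatticeIsometric L (L.map ψ) := by
  have injective : Function.Injective (ψ.addSubgroupMap L) := by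
    refine (injective_iff_map_eq_zero _).2 fun x hx => Subtype.ext (dotProduct_self_eq_zero.1 ?_)
    rw [← hψ x x.2 x x.2, show ψ x = 0 from congrArg Subtype.val hx, zero_dotProduct]
  exact ⟨.ofBijective _ ⟨injective, ψ.addSubgroupMap_surjective L⟩,
    fun x y => hψ x x.2 y y.2⟩

lemma signedReindex_dotProduct (σ : ι ≃ κ) (ε : ι → ℤˣ) (x y : ι → ℤ) :
    signedReindex σ ε x ⬝ᵥ signedReindex σ ε y = x ⬝ᵥ y := by
  rw [dotProduct, ← σ.sum_comp]
  refine Finset.sum_congr rfl fun i _ => ?_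
  rcases Int.units_eq_one_or (ε i) with h | h <;> simp [signedReindex, h]

lemma SignedEquivalent.latticeIsometric : SignedEquivalent L M → LatticeIsometric L M := by
  rintro ⟨σ, ε, rfl⟩
  exact latticeIsometric_map _ fun x _ y _ => signedReindex_dotProduct σ ε x y

theorem LatticeIsometric.signedEquivalent (hLM : LatticeIsometric L M) (hL : IsRegularLattice L)
    (hM : IsRegularLattice M) (hL' : ∀ i, ∃ x ∈ L, x i = 1) (hM' : ∀ j, ∃ y ∈ M, y j = 1) :
    SignedEquivalent L M := by
  obtain ⟨φ, hφ⟩ := hLM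
  have sum_abs_eq (x : L) : ∑ i, |latticeCoord L i x| = ∑ j, |latticeCoord M j (φ x)| := by
    refine le_antisymm ?_ (hL.sum_abs_apply_le (M.subtype.comp φ) (fun x => hφ x x) x)
    simpa [latticeCoord] using hM.sum_abs_apply_le (L.subtype.comp φ.symm)
      (fun y => by simpa using (hφ (φ.symm y) (φ.symm y)).symm) (φ x)
  obtain ⟨σ, ε, hσε⟩ := exists_equiv_smul_eq_of_sum_abs_eq
    (f := latticeCoord L) (fun i => latticeCoord_surjective (hL' i))
    (g := fun j => latticeCoord M j ∘ₗ φ.toAddMonoidHom.toIntLinearMap)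
    (fun j => (latticeCoord_surjective (hM' j)).comp φ.surjective) sum_abs_eq
  have apply_eq (x : L) : signedReindex σ ε x = φ x := by
    ext j
    obtain ⟨i, rfl⟩ := σ.surjective j
    simpa [latticeCoord, signedReindex, Units.smul_def] using (LinearMap.congr_fun (hσε i) x).symm
  refine ⟨σ, ε, AddSubgroup.ext fun y => ⟨?_, fun hy => ?_⟩⟩
  · rintro ⟨x, hx, rfl⟩
    exact apply_eq ⟨x, hx⟩ ▸ (φ ⟨x, hx⟩).2
  · exact ⟨φ.symm ⟨y, hy⟩, (φ.symm ⟨y, hy⟩).2, by rw [apply_eq, φ.apply_symm_apply]⟩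

end Lattices

lemma nonempty_periodicPts {α : Type*} [Finite α] [Nonempty α] (f : α → α) :
    (Function.periodicPts f).Nonempty := by
  obtain ⟨x⟩ := ‹Nonempty α›
  obtain ⟨m, n, hmn, heq⟩ := Finite.exists_ne_map_eq_of_infinite fun n => f^[n] x
  wlog h : m < n generalizing m n
  · exact this n m hmn.symm heq.symm (hmn.lt_or_gt.resolve_left h)
  refine ⟨f^[m] x, Function.mk_mem_periodicPts (Nat.sub_pos_of_lt h) ?_⟩
  rw [Function.IsPeriodicPt, Function.IsFixedPt, ← Function.iterate_add_apply,
    Nat.sub_add_cancel h.le, heq]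

lemma exists_balanced_subset {α V A : Type*} [AddCommMonoid A] {S : Finset α}
    (hS : S.Nonempty) {head tail : α → V} (h : ∀ i ∈ S, ∃ j ∈ S, tail j = head i) :
    ∃ T ⊆ S, T.Nonempty ∧ ∀ f : V → A, ∑ i ∈ T, f (head i) = ∑ i ∈ T, f (tail i) := by
  classical
  have next_exists (i : S) : ∃ j : S, tail j = head i := by simpa using h i i.2
  choose next hnext using next_exists
  let P := (Function.periodicPts next).toFinset
  have sum_eq (g : α → A) : ∑ i ∈ P.map (.subtype _), g i = ∑ i ∈ P, g i := Finset.sum_map _ _ _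
  refine ⟨P.map (.subtype _), Finset.map_subtype_subset P, ?_, fun f => ?_⟩
  · have := hS.to_subtype
    simpa [P] using nonempty_periodicPts next
  · rw [sum_eq fun i => f (head i), sum_eq fun i => f (tail i)]
    simp only [← hnext]
    have bij := Function.bijOn_periodicPts next
    exact Finset.sum_nbij next (by simpa [P, Set.MapsTo] using bij.mapsTo)
      (by simpa [P] using bij.injOn) (by simpa [P] using bij.surjOn) fun _ _ => rfl

namespace Multigraph

variable {G : Multigraph}

lemma boundaryHom_dotProduct (x : G.E → ℤ) (f : G.V → ℤ) :
    G.boundaryHom x ⬝ᵥ f = x ⬝ᵥ G.coboundaryHom f := by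
  simp only [dotProduct, boundaryHom, coboundaryHom, AddMonoidHom.coe_mk, ZeroHom.coe_mk,
    Finset.sum_mul]
  rw [Finset.sum_comm]
  simp [mul_assoc, sub_mul, ← Finset.mul_sum, Finset.sum_sub_distrib]

lemma mem_cycleSpace_iff {x : G.E → ℤ} :
    x ∈ G.cycleSpace ↔ ∀ f, x ⬝ᵥ G.coboundaryHom f = 0 := by
  simp only [cycleSpace, AddMonoidHom.mem_ker, ← boundaryHom_dotProduct]
  exact ⟨fun h f => by rw [h, zero_dotProduct], fun h => dotProduct_eq_zero _ h⟩

/-- The endpoint towards which the chain `x`, viewed as a flow, runs along `e`. -/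
def flowHead (x : G.E → ℤ) (e : G.E) : G.V := if 0 < x e then G.t e else G.s e

/-- The endpoint from which the chain `x`, viewed as a flow, runs along `e`. -/
def flowTail (x : G.E → ℤ) (e : G.E) : G.V := if 0 < x e then G.s e else G.t e

lemma sign_mul_coboundaryHom {x : G.E → ℤ} {e : G.E} (he : x e ≠ 0) (f : G.V → ℤ) :
    (x e).sign * G.coboundaryHom f e = f (flowHead x e) - f (flowTail x e) := by
  rcases he.lt_or_gt with h | h
  · simp [coboundaryHom, flowHead, flowTail, Int.sign_eq_neg_one_of_neg h, h.not_gt]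
  · simp [coboundaryHom, flowHead, flowTail, h, Int.sign_eq_one_of_pos]

lemma exists_flowTail_eq_flowHead {x : G.E → ℤ} (hx : x ∈ G.cycleSpace) {e : G.E}
    (he : x e ≠ 0) : ∃ e', x e' ≠ 0 ∧ flowTail x e' = flowHead x e := by
  by_contra! no_outflow
  let f : G.V → ℤ := Pi.single (flowHead x e) 1
  have f_nonneg (v : G.V) : 0 ≤ f v := (Pi.single_nonneg.2 zero_le_one : 0 ≤ f) v
  have term (e' : G.E) : x e' * G.coboundaryHom f e' = |x e'| * f (flowHead x e') := by
    by_cases he' : x e' = 0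
    · simp [he']
    · have f_tail : f (flowTail x e') = 0 := Pi.single_eq_of_ne (no_outflow e' he') 1
      rw [← sub_zero (f _), ← f_tail, ← sign_mul_coboundaryHom he', ← mul_assoc, mul_comm |x e'|,
        Int.sign_mul_abs]
  have inflow_pos : 0 < ∑ e', |x e'| * f (flowHead x e') :=
    Finset.sum_pos' (fun e' _ => mul_nonneg (abs_nonneg _) (f_nonneg _))
      ⟨e, Finset.mem_univ e, by simpa [f] using he⟩
  exact inflow_pos.ne' (by simpa only [dotProduct, term] using mem_cycleSpace_iff.1 hx f)

theorem isRegularLattice_cycleSpace : IsRegularLattice G.cycleSpace := by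
  intro x hx hx0
  obtain ⟨e₀, he₀⟩ := Function.ne_iff.1 hx0
  obtain ⟨T, hTx, ⟨e, heT⟩, hT⟩ := exists_balanced_subset (A := ℤ) (S := {e | x e ≠ 0})
    (head := flowHead x) (tail := flowTail x) ⟨e₀, by simpa using he₀⟩
    (by simpa using fun e => exists_flowTail_eq_flowHead hx)
  have support {e : G.E} (he : e ∈ T) : x e ≠ 0 := by simpa using hTx he
  refine ⟨fun e => if e ∈ T then (x e).sign else 0, mem_cycleSpace_iff.2 fun f => ?_, ?_, ?_⟩
  · calc ∑ e, (if e ∈ T then (x e).sign else 0) * G.coboundaryHom f e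
        = ∑ e ∈ T, (x e).sign * G.coboundaryHom f e := by simp [Finset.sum_ite_mem]
      _ = ∑ e ∈ T, (f (flowHead x e) - f (flowTail x e)) :=
          Finset.sum_congr rfl fun e he => sign_mul_coboundaryHom (support he) f
      _ = 0 := by rw [Finset.sum_sub_distrib, hT, sub_self]
  · exact Function.ne_iff.2 ⟨e, by simpa [heT] using support heT⟩
  · intro e
    by_cases he : e ∈ T <;> simp [he]

lemma IsCycle.exists_mem_cycleSpace {C : Finset G.E} (hC : G.IsCycle C) :
    ∃ x ∈ G.cycleSpace, ∀ e ∈ C, IsUnit (x e) := by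
  obtain ⟨n, -, c, v, c_inj, hcv, hv, -, rfl⟩ := hC
  have orientation (i : Fin n) : ∃ ε : ℤˣ, ∀ f : G.V → ℤ,
      ε * G.coboundaryHom f (c i) = f (v i.succ) - f (v i.castSucc) := by
    rcases hcv i with ⟨hs, ht⟩ | ⟨hs, ht⟩
    · exact ⟨1, fun f => by simp [coboundaryHom, hs, ht]⟩
    · exact ⟨-1, fun f => by simp [coboundaryHom, hs, ht]⟩
  choose ε hε using orientation
  refine ⟨∑ i, Pi.single (c i) (ε i : ℤ), mem_cycleSpace_iff.2 fun f => ?_, ?_⟩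
  · simp only [sum_dotProduct, single_dotProduct, hε, Finset.sum_sub_distrib]
    have h₁ := Fin.sum_univ_succ fun i => f (v i)
    have h₂ := Fin.sum_univ_castSucc fun i => f (v i)
    rw [hv] at h₁
    linarith
  · simp [Finset.sum_apply, Pi.single_apply, c_inj.eq_iff]

lemma exists_mem_cycleSpace_apply_eq_one {e : G.E} (he : ¬ G.IsBridge e) :
    ∃ x ∈ G.cycleSpace, x e = 1 := by
  obtain ⟨C, hC, heC⟩ : ∃ C, G.IsCycle C ∧ e ∈ C := by simpa [IsBridge] using he
  obtain ⟨x, hx, hxC⟩ := hC.exists_mem_cycleSpace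
  obtain ⟨u, hu⟩ := hxC e heC
  exact ⟨(↑u⁻¹ : ℤ) • x, zsmul_mem hx _, by simp [← hu]⟩

/-- The edge `e` has endpoints `a` and `b`, in either order. -/
def Joins (e : G.E) (a b : G.V) : Prop :=
  (G.s e = a ∧ G.t e = b) ∨ (G.s e = b ∧ G.t e = a)

lemma joins_iff_sym2_eq {e : G.E} {a b : G.V} : Joins e a b ↔ s(G.s e, G.t e) = s(a, b) := by
  rw [Joins, Sym2.eq_iff]

lemma injective_of_forall_joins {n : ℕ} {c : Fin n → G.E} {w : Fin (n + 1) → G.V}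
    (hw : Function.Injective w) (hc : ∀ i, Joins (c i) (w i.castSucc) (w i.succ)) :
    Function.Injective c := by
  intro i j hij
  have ends_eq : s(w i.castSucc, w i.succ) = s(w j.castSucc, w j.succ) := by
    rw [← joins_iff_sym2_eq.1 (hc i), ← joins_iff_sym2_eq.1 (hc j), hij]
  simp only [Sym2.eq_iff, hw.eq_iff, Fin.ext_iff, Fin.val_castSucc, Fin.val_succ] at ends_eq
  lia

lemma isCycle_image_cons {n : ℕ} {e : G.E} {c : Fin n → G.E} {w : Fin (n + 1) → G.V}
    (hw : Function.Injective w) (hc : ∀ i, Joins (c i) (w i.castSucc) (w i.succ))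
    (hec : ∀ i, c i ≠ e) (hs : G.s e = w (Fin.last n)) (ht : G.t e = w 0) :
    G.IsCycle (Finset.univ.image (Fin.cons e c : Fin (n + 1) → G.E)) := by
  refine ⟨n + 1, n.succ_pos, Fin.cons e c, Fin.cons (w (Fin.last n)) w, ?_, ?_, ?_, ?_, rfl⟩
  · exact Fin.cons_injective_iff.2 ⟨by simpa using hec, injective_of_forall_joins hw hc⟩
  · refine Fin.cases (.inl ⟨hs, ht⟩) fun i => ?_
    simpa [← Fin.succ_castSucc, Joins] using hc i
  · simp [← Fin.succ_last]
  · refine Fin.cases (Fin.cases (by simp) ?_) fun i => Fin.cases ?_ ?_ <;>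
      simp [hw.eq_iff, ← Fin.succ_last, eq_comm]

variable (G) in
/-- The graph `G` with the edge `e` deleted, for use in reachability arguments: loops and
multiplicities of edges are forgotten. -/
def deleteEdge (e : G.E) : SimpleGraph G.V :=
  SimpleGraph.fromRel fun a b => ∃ e' ≠ e, G.s e' = a ∧ G.t e' = b

lemma exists_joins_of_deleteEdge_adj {e : G.E} {a b : G.V} (h : (G.deleteEdge e).Adj a b) :
    ∃ e' ≠ e, Joins e' a b := by
  obtain ⟨-, ⟨e', he', h⟩ | ⟨e', he', h⟩⟩ := (SimpleGraph.fromRel_adj ..).1 h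
  exacts [⟨e', he', .inl h⟩, ⟨e', he', .inr h⟩]

lemma deleteEdge_reachable {e e' : G.E} (he' : e' ≠ e) :
    (G.deleteEdge e).Reachable (G.s e') (G.t e') := by
  by_cases h : G.s e' = G.t e'
  · rw [h]
  · exact SimpleGraph.Adj.reachable ⟨h, .inl ⟨e', he', rfl, rfl⟩⟩

lemma IsBridge.not_reachable {e : G.E} (he : G.IsBridge e) :
    ¬ (G.deleteEdge e).Reachable (G.t e) (G.s e) := by
  intro h
  obtain ⟨p, hp⟩ := h.exists_isPath
  let w (i : Fin (p.length + 1)) : G.V := p.getVert i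
  have edge (i : Fin p.length) : ∃ e' ≠ e, Joins e' (w i.castSucc) (w i.succ) :=
    exists_joins_of_deleteEdge_adj (p.adj_getVert_succ i.2)
  choose c hce hc using edge
  have w_inj : Function.Injective w := fun i j hij =>
    Fin.ext (hp.getVert_injOn (Nat.le_of_lt_succ i.2) (Nat.le_of_lt_succ j.2) hij)
  exact he _ (isCycle_image_cons w_inj hc hce (by simp [w]) (by simp [w]))
    (Finset.mem_image_of_mem (Fin.cons e c) (Finset.mem_univ 0))

lemma IsBridge.exists_coboundaryHom_eq_single {e : G.E} (he : G.IsBridge e) :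
    ∃ f, G.coboundaryHom f = Pi.single e 1 := by
  classical
  let f (v : G.V) : ℤ := if (G.deleteEdge e).Reachable (G.t e) v then 1 else 0
  refine ⟨f, funext fun e' => ?_⟩
  rcases eq_or_ne e' e with rfl | hne
  · simp [coboundaryHom, f, he.not_reachable]
  · have same_side : (G.deleteEdge e).Reachable (G.t e) (G.s e') ↔
        (G.deleteEdge e).Reachable (G.t e) (G.t e') :=
      ⟨fun h => h.trans (deleteEdge_reachable hne),
        fun h => h.trans (deleteEdge_reachable hne).symm⟩
    simp [coboundaryHom, f, same_side, hne]

lemma IsBridge.apply_eq_zero {e : G.E} (he : G.IsBridge e) {x : G.E → ℤ}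
    (hx : x ∈ G.cycleSpace) : x e = 0 := by
  obtain ⟨f, hf⟩ := he.exists_coboundaryHom_eq_single
  simpa [hf] using mem_cycleSpace_iff.1 hx f

lemma exists_coboundaryHom_eq_of_forall_not_isBridge {z : G.E → ℤ}
    (hz : ∀ e, ¬ G.IsBridge e → z e = 0) : ∃ f, G.coboundaryHom f = z := by
  suffices z ∈ G.coboundaryHom.range from this
  rw [← Finset.univ_sum_single z]
  refine sum_mem fun e _ => ?_
  by_cases he : G.IsBridge e
  · obtain ⟨f, hf⟩ := he.exists_coboundaryHom_eq_single
    exact ⟨z e • f, by rw [map_zsmul, hf, ← Pi.single_smul', smul_eq_mul, mul_one]⟩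
  · simp [hz e he]

/-- Restriction of a chain on `G` to the edges that survive the contraction of `F`. -/
def restrictChain (F : Set G.E) : (G.E → ℤ) →+ ((G.contractSet F).E → ℤ) where
  toFun x e := x e.1
  map_zero' := rfl
  map_add' _ _ := rfl

lemma restrictChain_dotProduct {F : Set G.E} {x y : G.E → ℤ} (h : ∀ e ∈ F, x e * y e = 0) :
    restrictChain F x ⬝ᵥ restrictChain F y = x ⬝ᵥ y :=
  Fintype.sum_of_injective (fun e : (G.contractSet F).E => e.1) Subtype.val_injective _
    (fun e => x e * y e) (fun e he => h e (not_not.1 fun heF => he ⟨⟨e, heF⟩, rfl⟩)) fun _ => rfl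

lemma restrictChain_mem_cycleSpace (F : Set G.E) {x : G.E → ℤ} (hx : x ∈ G.cycleSpace) :
    restrictChain F x ∈ (G.contractSet F).cycleSpace := by
  refine mem_cycleSpace_iff.2 fun g => ?_
  let f (v : G.V) : ℤ := g (Quot.mk _ v)
  have f_const (e : G.E) (he : e ∈ F) : G.coboundaryHom f e = 0 :=
    sub_eq_zero.2 (congrArg g (Quot.sound ⟨e, he, rfl, rfl⟩)).symm
  calc restrictChain F x ⬝ᵥ (G.contractSet F).coboundaryHom g
      = restrictChain F x ⬝ᵥ restrictChain F (G.coboundaryHom f) := rfl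
    _ = x ⬝ᵥ G.coboundaryHom f := restrictChain_dotProduct fun e he => by simp [f_const e he]
    _ = 0 := mem_cycleSpace_iff.1 hx f

lemma mem_cycleSpace_of_restrictChain_mem {F : Set G.E} (hF : ∀ e ∈ F, G.IsBridge e)
    {x : G.E → ℤ} (hxF : ∀ e ∈ F, x e = 0)
    (hx : restrictChain F x ∈ (G.contractSet F).cycleSpace) : x ∈ G.cycleSpace := by
  classical
  refine mem_cycleSpace_iff.2 fun f => ?_
  -- A coboundary `δ f'` supported on `F` corrects `f`, so that `f - f'` descends to the quotient.
  obtain ⟨f', hf'⟩ := exists_coboundaryHom_eq_of_forall_not_isBridge (G := G)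
    (z := F.indicator (G.coboundaryHom f)) fun e he => Set.indicator_of_notMem (mt (hF e) he) _
  have const (e : G.E) (he : e ∈ F) : (f - f') (G.s e) = (f - f') (G.t e) := by
    have : G.coboundaryHom f' e = G.coboundaryHom f e := by rw [hf', Set.indicator_of_mem he]
    simp only [coboundaryHom, AddMonoidHom.coe_mk, ZeroHom.coe_mk] at this
    simp only [Pi.sub_apply]
    linarith
  let g : (G.contractSet F).V → ℤ := Quot.lift (f - f') (by
    rintro _ _ ⟨e, he, rfl, rfl⟩; exact const e he)
  have correction : x ⬝ᵥ G.coboundaryHom f' = 0 := by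
    refine Finset.sum_eq_zero fun e _ => ?_
    by_cases he : e ∈ F <;> simp [hf', hxF, he]
  calc x ⬝ᵥ G.coboundaryHom f = x ⬝ᵥ G.coboundaryHom (f - f') := by
        rw [map_sub, dotProduct_sub, correction, sub_zero]
    _ = restrictChain F x ⬝ᵥ (G.contractSet F).coboundaryHom g :=
        (restrictChain_dotProduct fun e he => by simp [hxF e he]).symm
    _ = 0 := mem_cycleSpace_iff.1 hx g

lemma map_restrictChain_cycleSpace {F : Set G.E} (hF : ∀ e ∈ F, G.IsBridge e) :
    G.cycleSpace.map (restrictChain F) = (G.contractSet F).cycleSpace := by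
  ext y
  constructor
  · rintro ⟨x, hx, rfl⟩
    exact restrictChain_mem_cycleSpace F hx
  · intro hy
    let x : G.E → ℤ := Function.extend (fun e : (G.contractSet F).E => e.1) y 0
    have restrict_x : restrictChain F x = y := funext (Subtype.val_injective.extend_apply y 0)
    refine ⟨x, mem_cycleSpace_of_restrictChain_mem hF (fun e he => ?_) (restrict_x ▸ hy),
      restrict_x⟩
    exact Function.extend_apply' _ _ _ (by rintro ⟨e', rfl⟩; exact e'.2 he)

lemma latticeIsometric_contractSet {F : Set G.E} (hF : ∀ e ∈ F, G.IsBridge e) :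
    LatticeIsometric G.cycleSpace (G.contractSet F).cycleSpace := by
  rw [← map_restrictChain_cycleSpace hF]
  exact latticeIsometric_map _ fun x hx y _ =>
    restrictChain_dotProduct fun e he => by rw [(hF e he).apply_eq_zero hx, zero_mul]

lemma exists_mem_cycleSpace_contractBridges_apply_eq_one (e : G.contractBridges.E) :
    ∃ y ∈ G.contractBridges.cycleSpace, y e = 1 := by
  obtain ⟨x, hx, hxe⟩ := exists_mem_cycleSpace_apply_eq_one e.2
  exact ⟨_, restrictChain_mem_cycleSpace _ hx, hxe⟩

end Multigraph

lemma jacIsoGraph_iff_latticeIsometric {G₁ G₂ : Multigraph} :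
    JacIsoGraph G₁ G₂ ↔ LatticeIsometric G₁.cycleSpace G₂.cycleSpace :=
  Iff.rfl

lemma cyclicallyEquivalent_iff_signedEquivalent {G₁ G₂ : Multigraph} :
    CyclicallyEquivalent G₁ G₂ ↔ SignedEquivalent G₁.cycleSpace G₂.cycleSpace := by
  constructor
  · rintro ⟨σ, ε, hε, h⟩
    exact ⟨σ, fun e => (Int.isUnit_iff.2 (hε e)).unit, SetLike.coe_injective h⟩
  · rintro ⟨σ, ε, h⟩
    exact ⟨σ, fun e => ε e, fun e => Int.isUnit_iff.1 (ε e).isUnit, congrArg SetLike.coe h⟩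

theorem graph_torelli_general (G₁ G₂ : Multigraph) :
    JacIsoGraph G₁ G₂ ↔ CyclicallyEquivalent G₁.contractBridges G₂.contractBridges := by
  have contract (G : Multigraph) :
      LatticeIsometric G.cycleSpace G.contractBridges.cycleSpace :=
    Multigraph.latticeIsometric_contractSet fun _ he => he
  rw [jacIsoGraph_iff_latticeIsometric, cyclicallyEquivalent_iff_signedEquivalent]
  constructor
  · intro h
    exact ((contract G₁).symm.trans (h.trans (contract G₂))).signedEquivalent
      Multigraph.isRegularLattice_cycleSpace Multigraph.isRegularLattice_cycleSpace
      Multigraph.exists_mem_cycleSpace_contractBridges_apply_eq_one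
      Multigraph.exists_mem_cycleSpace_contractBridges_apply_eq_one
  · intro h
    exact (contract G₁).trans (h.latticeIsometric.trans (contract G₂).symm)

/-- Torelli theorem for graphs: for two finite connected multigraphs
`G₁`, `G₂`, the Jacobian tori `Jac(G₁)` and `Jac(G₂)` are isomorphic if and only if
`G₁^(2)` and `G₂^(2)` are cyclically equivalent. -/
theorem graph_torelli (G₁ G₂ : Multigraph) (h₁ : G₁.Connected) (h₂ : G₂.Connected) :
    JacIsoGraph G₁ G₂ ↔ CyclicallyEquivalent G₁.contractBridges G₂.contractBridges :=
  graph_torelli_general G₁ G₂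
end
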